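/- Let M be a reduced G_C-perfect R-module of G_C-dimension n, and let k ≥ 0 be an integer. Then M is C-k-torsionless if and only if grade_R(Ext_R^n(M,C)) ≥ n + k. -/

import Mathlib

open CategoryTheory TensorProduct

noncomputable section

universe u

variable (R : Type u) [CommRing R]

/-- The `i`-th Ext module `Ext_R^i(M, N)`. -/
def ExtM (M N : ModuleCat.{u} R) (i : ℕ) : ModuleCat.{u} R :=
  ((Ext R (ModuleCat.{u} R) i).obj (Opposite.op M)).obj N

/-- The `i`-th Tor module `Tor_i^R(M, N)`. -/
def TorM (M N : ModuleCat.{u} R) (i : ℕ) : ModuleCat.{u} R :=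
  ((Tor (ModuleCat.{u} R) i).obj M).obj N

/-- The biduality (evaluation) map `M → Hom_R(Hom_R(M, C), C)`. -/
def bidualityMap (C M : ModuleCat.{u} R) :
    ↥M →ₗ[R] ((↥M →ₗ[R] ↥C) →ₗ[R] ↥C) :=
  (LinearMap.id : (↥M →ₗ[R] ↥C) →ₗ[R] (↥M →ₗ[R] ↥C)).flip

/-- `C` is a semidualizing `R`-module. -/
def IsSemidualizing (C : ModuleCat.{u} R) : Prop :=
  Module.Finite R ↥C ∧
  Function.Bijective (fun r : R => (r • LinearMap.id : ↥C →ₗ[R] ↥C)) ∧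
  ∀ i : ℕ, 0 < i → Subsingleton (ExtM R C C i)

/-- `M` is totally `C`-reflexive. -/
def IsTotallyCReflexive (C M : ModuleCat.{u} R) : Prop :=
  Module.Finite R ↥M ∧
  Function.Bijective (bidualityMap R C M) ∧
  (∀ i : ℕ, 0 < i → Subsingleton (ExtM R M C i)) ∧
  (∀ i : ℕ, 0 < i → Subsingleton (ExtM R (ModuleCat.of R (↥M →ₗ[R] ↥C)) C i))

/-- `G_C`-dimension of `M` is at most `n`: there is an exact sequence
`0 → X_n → ⋯ → X_0 → M → 0` with each `X_i` totally `C`-reflexive. -/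
def gcdimLE (C : ModuleCat.{u} R) : ℕ → ModuleCat.{u} R → Prop
  | 0, M => IsTotallyCReflexive R C M
  | n+1, M => ∃ (X K : ModuleCat.{u} R) (f : ↥K →ₗ[R] ↥X) (g : ↥X →ₗ[R] ↥M),
      Function.Injective f ∧ Function.Surjective g ∧
      LinearMap.ker g = LinearMap.range f ∧
      IsTotallyCReflexive R C X ∧ gcdimLE C n K

/-- The `G_C`-dimension of `M`, as an element of `ℕ∞`. -/
def gcdim (C M : ModuleCat.{u} R) : ℕ∞ :=
  sInf ((fun n : ℕ => (n : ℕ∞)) '' {n | gcdimLE R C n M})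

/-- `grade_R(M) = inf { i | Ext_R^i(M, R) ≠ 0 }`, with `grade 0 = ∞`. -/
def gradeR (M : ModuleCat.{u} R) : ℕ∞ :=
  sInf ((fun i : ℕ => (i : ℕ∞)) ''
    {i | ¬ Subsingleton (ExtM R M (ModuleCat.of R R) i)})

/-- Reduced grade of `M` with respect to `C`. -/
def rgrade (C M : ModuleCat.{u} R) : ℕ∞ :=
  sInf ((fun i : ℕ => (i : ℕ∞)) ''
    {i | 0 < i ∧ ¬ Subsingleton (ExtM R M C i)})

/-- `M` is reduced `G_C`-perfect. -/
def IsReducedGCPerfect (C M : ModuleCat.{u} R) : Prop :=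
  gcdim R C M ≠ ⊤ ∧ rgrade R C M = gcdim R C M

/-- `M` is `G_C`-perfect. -/
def IsGCPerfect (C M : ModuleCat.{u} R) : Prop :=
  gcdim R C M ≠ ⊤ ∧ gradeR R M = gcdim R C M

/-- `π : P → M` is a projective cover: `P` projective, `π` surjective with superfluous kernel. -/
def IsProjectiveCover {P M : ModuleCat.{u} R} (π : ↥P →ₗ[R] ↥M) : Prop :=
  Module.Projective R ↥P ∧ Function.Surjective π ∧
  ∀ N : Submodule R ↥P, N ⊔ LinearMap.ker π = ⊤ → N = ⊤

/-- `P₁ →d P₀ →π M → 0` is a minimal projective presentation of `M`. -/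
def IsMinimalPresentation {P1 P0 M : ModuleCat.{u} R}
    (d : ↥P1 →ₗ[R] ↥P0) (π : ↥P0 →ₗ[R] ↥M) : Prop :=
  Module.Finite R ↥P1 ∧ Module.Finite R ↥P0 ∧
  IsProjectiveCover R π ∧
  LinearMap.range d = LinearMap.ker π ∧
  Module.Projective R ↥P1 ∧
  ∀ N : Submodule R ↥P1, N ⊔ LinearMap.ker d = ⊤ → N = ⊤

/-- `T` is (a module isomorphic to) the transpose `Tr_C(M)` of `M` with respect to `C`,
computed from a minimal projective presentation of `M`. -/
def IsTransposeC (C M T : ModuleCat.{u} R) : Prop :=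
  ∃ (P1 P0 : ModuleCat.{u} R) (d : ↥P1 →ₗ[R] ↥P0) (π : ↥P0 →ₗ[R] ↥M),
    IsMinimalPresentation R d π ∧
    Nonempty (↥T ≃ₗ[R]
      ((↥P1 →ₗ[R] ↥C) ⧸ LinearMap.range (LinearMap.lcomp R ↥C d)))

/-- `T` is the usual Auslander transpose `Tr(M) = Tr_R(M)`. -/
def IsTranspose (M T : ModuleCat.{u} R) : Prop :=
  IsTransposeC R (ModuleCat.of R R) M T

/-- `S` is (a module isomorphic to) the first syzygy `Ω N`, i.e. the kernel of a
projective cover of `N`. -/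
def IsSyzygyOf (N S : ModuleCat.{u} R) : Prop :=
  ∃ (P : ModuleCat.{u} R) (π : ↥P →ₗ[R] ↥N),
    Module.Finite R ↥P ∧ IsProjectiveCover R π ∧
    Nonempty (↥S ≃ₗ[R] LinearMap.ker π)

/-- `S` is (a module isomorphic to) the `n`-th syzygy `Ωⁿ M`. -/
def IsNthSyzygy : ℕ → ModuleCat.{u} R → ModuleCat.{u} R → Prop
  | 0, M, S => Nonempty (↥S ≃ₗ[R] ↥M)
  | n+1, M, S => ∃ K : ModuleCat.{u} R, IsNthSyzygy n M K ∧ IsSyzygyOf R K S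

/-- `L` is (a module isomorphic to) `λ M = Ω Tr M`. -/
def IsLambda (M L : ModuleCat.{u} R) : Prop :=
  ∃ T : ModuleCat.{u} R, IsTranspose R M T ∧ IsSyzygyOf R T L

/-- `M` is horizontally linked, i.e. `M ≅ λλM`. -/
def IsHorizontallyLinked (M : ModuleCat.{u} R) : Prop :=
  ∃ L L2 : ModuleCat.{u} R, IsLambda R M L ∧ IsLambda R L L2 ∧
    Nonempty (↥M ≃ₗ[R] ↥L2)

/-- `M` is stable: it has no non-zero projective direct summand. -/
def IsStable (M : ModuleCat.{u} R) : Prop :=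
  ∀ (P N : ModuleCat.{u} R), Module.Projective R ↥P →
    Nonempty (↥M ≃ₗ[R] (↥P × ↥N)) → Subsingleton ↥P

/-- `N` belongs to the Auslander class `A_C`. -/
def MemAuslanderClass (C N : ModuleCat.{u} R) : Prop :=
  Function.Bijective (TensorProduct.mk R ↥N ↥C) ∧
  (∀ i : ℕ, 0 < i → Subsingleton (TorM R C N i)) ∧
  (∀ i : ℕ, 0 < i → Subsingleton
    (ExtM R C (ModuleCat.of R (↥N ⊗[R] ↥C)) i))

/-- `R` is semiperfect: every finite `R`-module has a projective cover. -/
def IsSemiperfectRing : Prop :=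
  ∀ M : ModuleCat.{u} R, Module.Finite R ↥M →
    ∃ (P : ModuleCat.{u} R) (π : ↥P →ₗ[R] ↥M),
      Module.Finite R ↥P ∧ IsProjectiveCover R π

/-- Depth over a local ring, via Ext from the residue field. -/
def rdepth [IsLocalRing R] (M : ModuleCat.{u} R) : ℕ∞ :=
  sInf ((fun i : ℕ => (i : ℕ∞)) ''
    {i | ¬ Subsingleton
      (ExtM R (ModuleCat.of R (IsLocalRing.ResidueField R)) M i)})

/-- Projective dimension at most `n`. -/
def pdimLE : ℕ → ModuleCat.{u} R → Prop
  | 0, M => Module.Projective R ↥M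
  | n+1, M => ∃ (X K : ModuleCat.{u} R) (f : ↥K →ₗ[R] ↥X) (g : ↥X →ₗ[R] ↥M),
      Function.Injective f ∧ Function.Surjective g ∧
      LinearMap.ker g = LinearMap.range f ∧
      Module.Projective R ↥X ∧ pdimLE n K

/-- Projective dimension, as an element of `ℕ∞`. -/
def pdim (M : ModuleCat.{u} R) : ℕ∞ :=
  sInf ((fun n : ℕ => (n : ℕ∞)) '' {n | pdimLE R n M})

/-- `M` is `C`-`k`-torsionless. -/
def IsCkTorsionless (C M : ModuleCat.{u} R) (k : ℕ) : Prop :=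
  k = 0 ∨ ∀ T : ModuleCat.{u} R, IsTransposeC R C M T →
    ∀ i : ℕ, 1 ≤ i → i ≤ k → Subsingleton (ExtM R T C i)

/-- `M` is a `C`-syzygy: it embeds into `P ⊗_R C` with `P` finite projective. -/
def IsCSyzygy (C M : ModuleCat.{u} R) : Prop :=
  ∃ (P : ModuleCat.{u} R), Module.Finite R ↥P ∧ Module.Projective R ↥P ∧
    ∃ f : ↥M →ₗ[R] (↥P ⊗[R] ↥C), Function.Injective f


/-- There is an exact sequence `0 → N → X_k → ⋯ → X_1 → M → 0` of finite `R`-modules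
with `Ext_R^i(X_j, C) = 0` for all `i > 0` and all `j`. -/
def ExtVanishingChain (C : ModuleCat.{u} R) : ℕ → ModuleCat.{u} R → ModuleCat.{u} R → Prop
  | 0, N, M => Nonempty (↥N ≃ₗ[R] ↥M)
  | k+1, N, M => ∃ (X K : ModuleCat.{u} R) (f : ↥K →ₗ[R] ↥X) (g : ↥X →ₗ[R] ↥M),
      Function.Injective f ∧ Function.Surjective g ∧
      LinearMap.ker g = LinearMap.range f ∧
      Module.Finite R ↥X ∧ (∀ i : ℕ, 0 < i → Subsingleton (ExtM R X C i)) ∧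
      ExtVanishingChain C k N K



section Helpers

variable {R}

lemma smul_extMk_aux {M N : ModuleCat.{u} R} (P : ProjectiveResolution M) {n : ℕ}
    (f : P.complex.X n ⟶ N) (m : ℕ) (hm : n + 1 = m) (hf : P.complex.d m n ≫ f = 0) (r : R)
    (hf' : P.complex.d m n ≫ (r • f) = 0) :
    P.extMk (r • f) m hm hf' = r • P.extMk f m hm hf := by
  rw [Abelian.Ext.smul_eq_comp_mk₀, P.extMk_comp_mk₀]
  congr 1

/-- Comparison in positive degrees. -/
lemma extM_equiv_succ (M N : ModuleCat.{u} R) (n : ℕ) :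
    Nonempty (ExtM R M N (n+1) ≃ₗ[R] Abelian.Ext M N (n+1)) := by
  let P := projectiveResolution M
  let K := P.complex.linearYonedaObj R N
  let e1 : ExtM R M N (n+1) ≅ K.homology (n+1) := P.isoExt (n+1) N
  let S := K.sc' n (n+1) (n+2)
  let e2 : K.homology (n+1) ≅ S.homology :=
    ShortComplex.homologyMapIso (K.isoSc' n (n+1) (n+2) (by simp) (by simp))
  let e3 := S.moduleCatHomologyIso
  let φ : LinearMap.ker S.g.hom →ₗ[R] Abelian.Ext M N (n+1) :=
    { toFun := fun f => P.extMk (n := n+1) f.1 (n+2) rfl f.2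
      map_add' := fun f g => (P.add_extMk _ _ _ _ _ _).symm
      map_smul' := fun r f => smul_extMk_aux P _ _ _ f.2 r (r • f).2 }
  have hsurj : Function.Surjective φ := fun α => by
    obtain ⟨f, hf, h⟩ := P.extMk_surjective α (n+2) rfl
    exact ⟨⟨f, hf⟩, h⟩
  have hker : LinearMap.ker φ = LinearMap.range S.moduleCatToCycles := by
    ext f
    rw [LinearMap.mem_ker]
    refine (P.extMk_eq_zero_iff f.1 (n+2) rfl f.2 n rfl).trans ?_
    constructor
    · rintro ⟨g, hg⟩
      exact ⟨g, Subtype.ext hg⟩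
    · rintro ⟨g, hg⟩
      exact ⟨g, congrArg Subtype.val hg⟩
  exact ⟨(e1 ≪≫ e2 ≪≫ e3).toLinearEquiv.trans
    ((Submodule.quotEquivOfEq _ _ hker.symm).trans (φ.quotKerEquivOfSurjective hsurj))⟩

lemma extM_zero (M N : ModuleCat.{u} R) :
    Subsingleton (ExtM R M N 0) ↔ Subsingleton (Abelian.Ext M N 0) := by
  let P := projectiveResolution M
  let K := P.complex.linearYonedaObj R N
  let e1 : ExtM R M N 0 ≅ K.homology 0 := P.isoExt 0 N
  let S := K.sc' 0 0 1
  let e2 : K.homology 0 ≅ S.homology :=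
    ShortComplex.homologyMapIso (K.isoSc' 0 0 1 (by simp) (by simp))
  let e3 := S.moduleCatHomologyIso
  rw [(e1 ≪≫ e2 ≪≫ e3).toLinearEquiv.toEquiv.subsingleton_congr,
    Abelian.Ext.homEquiv₀.subsingleton_congr]
  have hS : S.f = 0 := K.shape _ _ (by simp)
  let p : P.complex.X 0 ⟶ M := P.π.f 0
  have hepi : Epi p := inferInstanceAs (Epi (P.π.f 0))
  have hd : P.complex.d 1 0 ≫ p = 0 := P.complex_d_comp_π_f_zero
  have key : ∀ f : P.complex.X 0 ⟶ N, P.complex.d 1 0 ≫ f = 0 →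
      ∃ g : M ⟶ N, p ≫ g = f := by
    intro f hf
    have h0 := P.exact₀
    have : Epi (ShortComplex.mk _ _ P.complex_d_comp_π_f_zero).g := hepi
    exact ⟨h0.desc f hf, h0.g_desc f hf⟩
  constructor
  · intro h
    refine subsingleton_of_forall_eq 0 fun g => ?_
    let x : P.complex.X 0 ⟶ N := p ≫ g
    have hx : P.complex.d 1 0 ≫ x = 0 := by
      rw [← Category.assoc, hd, Limits.zero_comp]
    let y : LinearMap.ker S.g.hom := ⟨x, hx⟩
    have h1 : (LinearMap.range S.moduleCatToCycles).mkQ y = 0 := h.elim _ _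
    rw [Submodule.mkQ_apply, Submodule.Quotient.mk_eq_zero] at h1
    obtain ⟨z, hz⟩ := h1
    have hz' : S.f.hom z = x := congrArg Subtype.val hz
    have : x = 0 := by rw [← hz', hS]; rfl
    have hc : p ≫ g = p ≫ (0 : M ⟶ N) := this.trans Limits.comp_zero.symm
    exact (cancel_epi p).1 hc
  · intro h
    refine Submodule.Quotient.subsingleton_iff.2 (eq_top_iff.2 ?_)
    rintro y -
    obtain ⟨g, hg⟩ := key y.1 y.2
    have hg0 : g = 0 := h.elim _ _
    have : y = 0 := Subtype.ext (by rw [← hg, hg0]; exact Limits.comp_zero)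
    rw [this]; exact Submodule.zero_mem _

lemma extM_iff (M N : ModuleCat.{u} R) (i : ℕ) :
    Subsingleton (ExtM R M N i) ↔ Subsingleton (Abelian.Ext M N i) := by
  cases i with
  | zero => exact extM_zero M N
  | succ n => exact (extM_equiv_succ M N n).some.toEquiv.subsingleton_congr

/-- Vanishing of `Ext^i_R(A, N)` for unbundled modules. -/
def EZ (R : Type u) [CommRing R] (A N : Type u) [AddCommGroup A] [Module R A]
    [AddCommGroup N] [Module R N] (i : ℕ) : Prop :=
  Subsingleton (Abelian.Ext (ModuleCat.of R A) (ModuleCat.of R N) i)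

section Toolkit

variable {A B D N X Y : Type u} [AddCommGroup A] [Module R A] [AddCommGroup B] [Module R B]
  [AddCommGroup D] [Module R D] [AddCommGroup N] [Module R N] [AddCommGroup X] [Module R X]
  [AddCommGroup Y] [Module R Y]

lemma extM_iff_EZ (M N : ModuleCat.{u} R) (i : ℕ) : Subsingleton (ExtM R M N i) ↔ EZ R M N i :=
  extM_iff M N i

lemma EZ_zero_iff : EZ R A N 0 ↔ ∀ φ : A →ₗ[R] N, φ = 0 := by
  unfold EZ
  rw [Abelian.Ext.homEquiv₀.subsingleton_congr]
  constructor
  · intro h φ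
    exact congrArg ModuleCat.Hom.hom (h.elim (ModuleCat.ofHom φ) 0)
  · intro h
    refine subsingleton_of_forall_eq 0 fun g => ?_
    exact ModuleCat.hom_ext (h g.hom)

lemma EZ_of_projective [Module.Projective R A] (i : ℕ) (hi : 0 < i) : EZ R A N i := by
  obtain ⟨j, rfl⟩ := Nat.exists_eq_succ_of_ne_zero hi.ne'
  have : Projective (ModuleCat.of R A) := (IsProjective.iff_projective (R := R) A).1 inferInstance
  exact subsingleton_of_forall_eq 0 fun x => Abelian.Ext.eq_zero_of_projective x

lemma EZ_retract (s : A →ₗ[R] B) (r : B →ₗ[R] A) (h : r ∘ₗ s = LinearMap.id) {i : ℕ}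
    (hB : EZ R B N i) : EZ R A N i := by
  refine subsingleton_of_forall_eq 0 fun x => ?_
  have hid : ModuleCat.ofHom s ≫ ModuleCat.ofHom r = 𝟙 (ModuleCat.of R A) := by
    rw [← ModuleCat.ofHom_comp, h]; rfl
  have h1 : (Abelian.Ext.mk₀ (ModuleCat.ofHom r)).comp x (zero_add i) = 0 := hB.elim _ _
  have h2 : (Abelian.Ext.mk₀ (ModuleCat.ofHom s)).comp
      ((Abelian.Ext.mk₀ (ModuleCat.ofHom r)).comp x (zero_add i)) (zero_add i) = x := by
    rw [Abelian.Ext.mk₀_comp_mk₀_assoc, hid, Abelian.Ext.mk₀_id_comp]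
  rw [← h2, h1, Abelian.Ext.comp_zero]

lemma EZ_congr (e : A ≃ₗ[R] B) {i : ℕ} : EZ R A N i ↔ EZ R B N i :=
  ⟨EZ_retract e.symm.toLinearMap e.toLinearMap (by ext; simp),
   EZ_retract e.toLinearMap e.symm.toLinearMap (by ext; simp)⟩

lemma EZ_retract_right (s : A →ₗ[R] B) (r : B →ₗ[R] A) (h : r ∘ₗ s = LinearMap.id) {i : ℕ}
    (hB : EZ R N B i) : EZ R N A i := by
  refine subsingleton_of_forall_eq 0 fun x => ?_
  have hid : ModuleCat.ofHom s ≫ ModuleCat.ofHom r = 𝟙 (ModuleCat.of R A) := by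
    rw [← ModuleCat.ofHom_comp, h]; rfl
  have h1 : x.comp (Abelian.Ext.mk₀ (ModuleCat.ofHom s)) (add_zero i) = 0 := hB.elim _ _
  have h2 : (x.comp (Abelian.Ext.mk₀ (ModuleCat.ofHom s)) (add_zero i)).comp
      (Abelian.Ext.mk₀ (ModuleCat.ofHom r)) (add_zero i) = x := by
    rw [Abelian.Ext.comp_assoc_of_second_deg_zero, Abelian.Ext.mk₀_comp_mk₀, hid,
      Abelian.Ext.comp_mk₀_id]
  rw [← h2, h1, Abelian.Ext.zero_comp]

lemma EZ_congr_right (e : A ≃ₗ[R] B) {i : ℕ} : EZ R N A i ↔ EZ R N B i :=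
  ⟨EZ_retract_right e.symm.toLinearMap e.toLinearMap (by ext; simp),
   EZ_retract_right e.toLinearMap e.symm.toLinearMap (by ext; simp)⟩

/-- short exact sequences, unbundled -/
structure SES (f : A →ₗ[R] B) (g : B →ₗ[R] D) : Prop where
  inj : Function.Injective f
  surj : Function.Surjective g
  exact : Function.Exact f g

/-- associated short complex -/
abbrev SES.sc {f : A →ₗ[R] B} {g : B →ₗ[R] D} (h : SES f g) : ShortComplex (ModuleCat.{u} R) :=
  ShortComplex.mk (ModuleCat.ofHom f) (ModuleCat.ofHom g)
    (by rw [← ModuleCat.ofHom_comp, h.exact.linearMap_comp_eq_zero]; rfl)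

lemma SES.shortExact {f : A →ₗ[R] B} {g : B →ₗ[R] D} (h : SES f g) : h.sc.ShortExact where
  exact := (ShortComplex.ShortExact.moduleCat_exact_iff_function_exact _).2 h.exact
  mono_f := (ModuleCat.mono_iff_injective _).2 h.inj
  epi_g := (ModuleCat.epi_iff_surjective _).2 h.surj

variable {f : A →ₗ[R] B} {g : B →ₗ[R] D}

lemma SES.mid (h : SES f g) {i : ℕ} (hA : EZ R A N i) (hD : EZ R D N i) : EZ R B N i := by
  refine subsingleton_of_forall_eq 0 fun x => ?_
  obtain ⟨y, hy⟩ := Abelian.Ext.contravariant_sequence_exact₂ h.shortExact (ModuleCat.of R N) x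
    (hA.elim _ _)
  rw [← hy, show y = 0 from hD.elim y 0, Abelian.Ext.comp_zero]

lemma SES.left (h : SES f g) {i : ℕ} (hB : EZ R B N i) (hD : EZ R D N (i+1)) : EZ R A N i := by
  refine subsingleton_of_forall_eq 0 fun x => ?_
  obtain ⟨y, hy⟩ := Abelian.Ext.contravariant_sequence_exact₁ h.shortExact (ModuleCat.of R N) x
    (add_comm 1 i) (hD.elim _ _)
  rw [← hy, show y = 0 from hB.elim y 0, Abelian.Ext.comp_zero]

lemma SES.right (h : SES f g) {i : ℕ} (hA : EZ R A N i) (hB : EZ R B N (i+1)) :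
    EZ R D N (i+1) := by
  refine subsingleton_of_forall_eq 0 fun x => ?_
  obtain ⟨y, hy⟩ := Abelian.Ext.contravariant_sequence_exact₃ h.shortExact (ModuleCat.of R N) x
    (hB.elim _ _) (add_comm 1 i)
  rw [← hy, show y = 0 from hA.elim y 0, Abelian.Ext.comp_zero]

lemma SES.right_zero (h : SES f g) (hA : ∀ φ : A →ₗ[R] N, ∃ ψ : B →ₗ[R] N, ψ ∘ₗ f = φ)
    (hB : EZ R B N 1) : EZ R D N 1 := by
  refine subsingleton_of_forall_eq 0 fun x => ?_
  obtain ⟨y, hy⟩ := Abelian.Ext.contravariant_sequence_exact₃ h.shortExact (ModuleCat.of R N) x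
    (hB.elim _ _) (add_comm 1 0)
  obtain ⟨y, rfl⟩ := (Abelian.Ext.mk₀_bijective _ _).2 y
  obtain ⟨ψ, hψ⟩ := hA y.hom
  have hy2 : y = h.sc.f ≫ ModuleCat.ofHom ψ := ModuleCat.hom_ext hψ.symm
  rw [← hy, hy2, ← Abelian.Ext.mk₀_comp_mk₀, h.shortExact.extClass_comp_assoc]

lemma SES.extend (h : SES f g) (hD : EZ R D N 1) (φ : A →ₗ[R] N) :
    ∃ ψ : B →ₗ[R] N, ψ ∘ₗ f = φ := by
  obtain ⟨y, hy⟩ := Abelian.Ext.contravariant_sequence_exact₁ h.shortExact (ModuleCat.of R N)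
    (Abelian.Ext.mk₀ (ModuleCat.ofHom φ)) (add_comm 1 0) (hD.elim _ _)
  obtain ⟨y, rfl⟩ := (Abelian.Ext.mk₀_bijective _ _).2 y
  rw [Abelian.Ext.mk₀_comp_mk₀] at hy
  exact ⟨y.hom, congrArg ModuleCat.Hom.hom ((Abelian.Ext.mk₀_bijective _ _).1 hy)⟩

lemma SES.cov_right (h : SES f g) {i : ℕ} (hB : EZ R N B i) (hA : EZ R N A (i+1)) :
    EZ R N D i := by
  refine subsingleton_of_forall_eq 0 fun x => ?_
  obtain ⟨y, hy⟩ := Abelian.Ext.covariant_sequence_exact₃ (ModuleCat.of R N) h.shortExact x rfl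
    (hA.elim _ _)
  rw [← hy, show y = 0 from hB.elim y 0, Abelian.Ext.zero_comp]

lemma SES.cov_mid (h : SES f g) {i : ℕ} (hA : EZ R N A i) (hD : EZ R N D i) :
    EZ R N B i := by
  refine subsingleton_of_forall_eq 0 fun x => ?_
  obtain ⟨y, hy⟩ := Abelian.Ext.covariant_sequence_exact₂ (ModuleCat.of R N) h.shortExact x
    (hD.elim _ _)
  rw [← hy, show y = 0 from hA.elim y 0, Abelian.Ext.zero_comp]

lemma SES.lift (h : SES f g) (hA : EZ R N A 1) (φ : N →ₗ[R] D) :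
    ∃ ψ : N →ₗ[R] B, g ∘ₗ ψ = φ := by
  obtain ⟨y, hy⟩ := Abelian.Ext.covariant_sequence_exact₃ (ModuleCat.of R N) h.shortExact
    (Abelian.Ext.mk₀ (ModuleCat.ofHom φ)) rfl (hA.elim _ _)
  obtain ⟨y, rfl⟩ := (Abelian.Ext.mk₀_bijective _ _).2 y
  rw [Abelian.Ext.mk₀_comp_mk₀] at hy
  exact ⟨y.hom, congrArg ModuleCat.Hom.hom ((Abelian.Ext.mk₀_bijective _ _).1 hy)⟩

lemma SES_ker (hg : Function.Surjective g) : SES (LinearMap.ker g).subtype g :=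
  ⟨Subtype.val_injective, hg, fun x => ⟨fun h => ⟨⟨x, h⟩, rfl⟩, by rintro ⟨y, rfl⟩; exact y.2⟩⟩

lemma SES_mkQ (S : Submodule R B) : SES S.subtype S.mkQ :=
  ⟨Subtype.val_injective, S.mkQ_surjective, fun x => by simp⟩

lemma SES_range (hf : Function.Injective f) : SES f (LinearMap.range f).mkQ :=
  ⟨hf, Submodule.mkQ_surjective _, fun x => by simp⟩

lemma SES_prod : SES (LinearMap.inl R A B) (LinearMap.snd R A B) :=
  ⟨LinearMap.inl_injective, LinearMap.snd_surjective, Function.Exact.inl_snd⟩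

lemma EZ_prod {i : ℕ} (hA : EZ R A N i) (hB : EZ R B N i) : EZ R (A × B) N i :=
  SES_prod.mid hA hB

lemma EZ_prod_right {i : ℕ} (hA : EZ R N A i) (hB : EZ R N B i) : EZ R N (A × B) i :=
  SES_prod.cov_mid hA hB

/-- Dimension shift, linear form. -/
lemma SES.shift_equiv (h : SES f g) [Module.Projective R B] (i : ℕ) :
    Nonempty (Abelian.Ext (ModuleCat.of R A) (ModuleCat.of R N) (i+1) ≃ₗ[R]
      Abelian.Ext (ModuleCat.of R D) (ModuleCat.of R N) (i+2)) := by
  let φ := h.shortExact.extClass.precompOfLinear R (ModuleCat.of R N) (add_comm 1 (i+1))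
  have hB1 : EZ R B N (i+1) := EZ_of_projective _ (by omega)
  have hB2 : EZ R B N (i+2) := EZ_of_projective _ (by omega)
  refine ⟨LinearEquiv.ofBijective φ ⟨?_, ?_⟩⟩
  · rw [injective_iff_map_eq_zero]
    intro x hx
    obtain ⟨y, hy⟩ := Abelian.Ext.contravariant_sequence_exact₁ h.shortExact (ModuleCat.of R N) x
      (add_comm 1 (i+1)) hx
    rw [← hy, show y = 0 from hB1.elim y 0, Abelian.Ext.comp_zero]
  · intro x
    exact Abelian.Ext.contravariant_sequence_exact₃ h.shortExact (ModuleCat.of R N) x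
      (hB2.elim _ _) (add_comm 1 (i+1))

lemma SES.shift_equiv_one (h : SES f g) [Module.Projective R B] :
    Nonempty (((A →ₗ[R] N) ⧸ LinearMap.range (LinearMap.lcomp R N f)) ≃ₗ[R]
      Abelian.Ext (ModuleCat.of R D) (ModuleCat.of R N) 1) := by
  let φ0 := h.shortExact.extClass.precompOfLinear R (ModuleCat.of R N) (add_comm 1 0)
  let φ : (A →ₗ[R] N) →ₗ[R] Abelian.Ext (ModuleCat.of R D) (ModuleCat.of R N) 1 :=
    φ0 ∘ₗ (Abelian.Ext.linearEquiv₀ (R := R)).symm.toLinearMap ∘ₗ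
      (ModuleCat.homLinearEquiv (S := R) (M := ModuleCat.of R A) (N := ModuleCat.of R N)).symm.toLinearMap
  have hφ : ∀ a, φ a = h.shortExact.extClass.comp
      (Abelian.Ext.mk₀ (ModuleCat.ofHom a)) (add_comm 1 0) := fun a => rfl
  have hB1 : EZ R B N 1 := EZ_of_projective _ (by omega)
  have hsurj : Function.Surjective φ := by
    intro x
    obtain ⟨y, hy⟩ := Abelian.Ext.contravariant_sequence_exact₃ h.shortExact (ModuleCat.of R N) x
      (hB1.elim _ _) (add_comm 1 0)
    obtain ⟨y, rfl⟩ := (Abelian.Ext.mk₀_bijective _ _).2 y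
    exact ⟨y.hom, hy⟩
  have hker : LinearMap.ker φ = LinearMap.range (LinearMap.lcomp R N f) := by
    ext a
    rw [LinearMap.mem_ker, hφ]
    constructor
    · intro h0
      obtain ⟨y, hy⟩ := Abelian.Ext.contravariant_sequence_exact₁ h.shortExact
        (ModuleCat.of R N) _ (add_comm 1 0) h0
      obtain ⟨y, rfl⟩ := (Abelian.Ext.mk₀_bijective _ _).2 y
      rw [Abelian.Ext.mk₀_comp_mk₀] at hy
      exact ⟨y.hom, congrArg ModuleCat.Hom.hom ((Abelian.Ext.mk₀_bijective _ _).1 hy)⟩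
    · rintro ⟨ψ, rfl⟩
      have hy2 : ModuleCat.ofHom (LinearMap.lcomp R N f ψ) = h.sc.f ≫ ModuleCat.ofHom ψ := rfl
      rw [hy2, ← Abelian.Ext.mk₀_comp_mk₀, h.shortExact.extClass_comp_assoc]
  exact ⟨(Submodule.quotEquivOfEq _ _ hker.symm).trans (φ.quotKerEquivOfSurjective hsurj)⟩

end Toolkit

section Reflexive

variable (C : Type u) [AddCommGroup C] [Module R C]
variable {A B D : Type u} [AddCommGroup A] [Module R A] [AddCommGroup B] [Module R B]
  [AddCommGroup D] [Module R D]

/-- evaluation surjective: every functional on the dual is an evaluation -/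
def EvSurj (R : Type u) [CommRing R] (C : Type u) [AddCommGroup C] [Module R C]
    (A : Type u) [AddCommGroup A] [Module R A] : Prop :=
  ∀ Φ : (A →ₗ[R] C) →ₗ[R] C, ∃ a : A, ∀ φ, Φ φ = φ a

/-- torsionless -/
def EvInj (R : Type u) [CommRing R] (C : Type u) [AddCommGroup C] [Module R C]
    (A : Type u) [AddCommGroup A] [Module R A] : Prop :=
  ∀ a : A, (∀ φ : A →ₗ[R] C, φ a = 0) → a = 0

/-- totally reflexive (unbundled, without finiteness), -/
structure TR (R : Type u) [CommRing R] (C : Type u) [AddCommGroup C] [Module R C]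
    (A : Type u) [AddCommGroup A] [Module R A] : Prop where
  inj : EvInj R C A
  surj : EvSurj R C A
  e1 : ∀ i, 0 < i → EZ R A C i
  e2 : ∀ i, 0 < i → EZ R (A →ₗ[R] C) C i

lemma tr_iff (C M : ModuleCat.{u} R) :
    IsTotallyCReflexive R C M ↔ Module.Finite R M ∧ TR R C M := by
  have h1 : Function.Injective (bidualityMap R C M) ↔ EvInj R C M := by
    rw [injective_iff_map_eq_zero]
    refine forall_congr' fun a => ?_
    rw [LinearMap.ext_iff]
    rfl
  have h2 : Function.Surjective (bidualityMap R C M) ↔ EvSurj R C M := by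
    refine forall_congr' fun Φ => exists_congr fun a => ?_
    rw [LinearMap.ext_iff]
    exact forall_congr' fun φ => eq_comm
  have h3 : ∀ i, Subsingleton (ExtM R M C i) ↔ EZ R M C i := extM_iff_EZ M C
  have h4 : ∀ i, Subsingleton (ExtM R (ModuleCat.of R (↥M →ₗ[R] ↥C)) C i) ↔
    EZ R (M →ₗ[R] C) C i := extM_iff_EZ _ C
  unfold IsTotallyCReflexive Function.Bijective
  simp only [h1, h2, h3, h4]
  constructor
  · rintro ⟨a, ⟨b, c⟩, d, e⟩; exact ⟨a, b, c, d, e⟩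
  · rintro ⟨a, b, c, d, e⟩; exact ⟨a, ⟨b, c⟩, d, e⟩

variable {C}

lemma TR.prod (hA : TR R C A) (hB : TR R C B) : TR R C (A × B) where
  inj := by
    rintro ⟨a, b⟩ h
    have ha : a = 0 := hA.inj a fun φ => by simpa using h (φ ∘ₗ LinearMap.fst R A B)
    have hb : b = 0 := hB.inj b fun φ => by simpa using h (φ ∘ₗ LinearMap.snd R A B)
    rw [ha, hb]; rfl
  surj := by
    intro Φ
    obtain ⟨a, ha⟩ := hA.surj (Φ ∘ₗ LinearMap.lcomp R C (LinearMap.fst R A B))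
    obtain ⟨b, hb⟩ := hB.surj (Φ ∘ₗ LinearMap.lcomp R C (LinearMap.snd R A B))
    refine ⟨(a, b), fun φ => ?_⟩
    have h : φ = LinearMap.lcomp R C (LinearMap.fst R A B) (φ ∘ₗ LinearMap.inl R A B) +
        LinearMap.lcomp R C (LinearMap.snd R A B) (φ ∘ₗ LinearMap.inr R A B) := by
      ext x <;> simp <;> exact map_zero φ
    have ha' := ha (φ ∘ₗ LinearMap.inl R A B)
    have hb' := hb (φ ∘ₗ LinearMap.inr R A B)
    rw [LinearMap.comp_apply] at ha' hb'
    conv_lhs => rw [h]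
    rw [map_add, ha', hb']
    simp [← map_add]
  e1 := fun i hi => EZ_prod (hA.e1 i hi) (hB.e1 i hi)
  e2 := fun i hi => (EZ_congr (LinearMap.coprodEquiv R)).1 (EZ_prod (hA.e2 i hi) (hB.e2 i hi))

lemma TR.retract (hB : TR R C B) (s : A →ₗ[R] B) (r : B →ₗ[R] A) (h : r ∘ₗ s = LinearMap.id) :
    TR R C A where
  inj := by
    intro a ha
    have := hB.inj (s a) fun φ => ha (φ ∘ₗ s)
    have h2 : r (s a) = a := LinearMap.congr_fun h a
    rw [← h2, this, map_zero]
  surj := by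
    intro Φ
    obtain ⟨b, hb⟩ := hB.surj (Φ ∘ₗ LinearMap.lcomp R C s)
    refine ⟨r b, fun φ => ?_⟩
    have := hb (φ ∘ₗ r)
    simp only [LinearMap.comp_apply] at this
    rw [← this]
    congr 1
    ext a
    simpa using congrArg φ (LinearMap.congr_fun h a).symm
  e1 := fun i hi => EZ_retract s r h (hB.e1 i hi)
  e2 := fun i hi => EZ_retract (LinearMap.lcomp R C r) (LinearMap.lcomp R C s)
    (by ext φ a; simpa using congrArg φ (LinearMap.congr_fun h a)) (hB.e2 i hi)

/-- unbundled semidualizing -/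
structure SD (R : Type u) [CommRing R] (C : Type u) [AddCommGroup C] [Module R C] : Prop where
  fin : Module.Finite R C
  inj : ∀ r : R, (∀ c : C, r • c = 0) → r = 0
  surj : ∀ φ : C →ₗ[R] C, ∃ r : R, ∀ c, φ c = r • c
  ext : ∀ i, 0 < i → EZ R C C i

lemma sd_of (C : ModuleCat.{u} R) (h : IsSemidualizing R C) : SD R C where
  fin := h.1
  inj := by
    intro r hr
    apply h.2.1.1
    ext c
    change r • c = (0:R) • c
    rw [hr c, zero_smul]
  surj := by
    intro φ
    obtain ⟨r, hr⟩ := h.2.1.2 φ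
    exact ⟨r, fun c => (LinearMap.congr_fun hr c).symm⟩
  ext := fun i hi => (extM_iff_EZ C C i).1 (h.2.2 i hi)

lemma SD.tr_self (h : SD R C) : TR R C R where
  inj := by
    intro r hr
    exact h.inj r fun c => by simpa using hr (LinearMap.toSpanSingleton R C c)
  surj := by
    intro Φ
    obtain ⟨r, hr⟩ := h.surj (Φ ∘ₗ (LinearMap.ringLmapEquivSelf R R C).symm.toLinearMap)
    refine ⟨r, fun φ => ?_⟩
    have := hr (φ 1)
    simp only [LinearMap.comp_apply] at this
    have h2 : (LinearMap.ringLmapEquivSelf R R C).symm (φ 1) = φ := by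
      rw [LinearEquiv.symm_apply_eq]; rfl
    rw [LinearEquiv.coe_coe, h2] at this
    rw [this, ← map_smul, smul_eq_mul, mul_one]
  e1 := fun i hi => EZ_of_projective i hi
  e2 := fun i hi => (EZ_congr (LinearMap.ringLmapEquivSelf R R C)).2 (h.ext i hi)

lemma fin_pi_ind (p : ∀ (A : Type u) [AddCommGroup A] [Module R A], Prop) (h1 : p R)
    (h2 : ∀ (A B : Type u) [AddCommGroup A] [Module R A] [AddCommGroup B] [Module R B],
      p A → p B → p (A × B))
    (h3 : ∀ (A B : Type u) [AddCommGroup A] [Module R A] [AddCommGroup B] [Module R B]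
      (s : A →ₗ[R] B) (r : B →ₗ[R] A), r ∘ₗ s = LinearMap.id → p B → p A)
    (P : Type u) [AddCommGroup P] [Module R P] [Module.Finite R P] [Module.Projective R P] :
    p P := by
  have hfree : ∀ n, p (Fin n → R) := by
    intro n
    induction n with
    | zero => exact h3 _ _ 0 0 (LinearMap.ext fun x => Subsingleton.elim _ _) h1
    | succ n ih =>
      let e := Fin.consLinearEquiv R (fun _ : Fin (n+1) => R)
      exact h3 _ _ e.symm.toLinearMap e.toLinearMap (by ext; simp) (h2 _ _ h1 ih)
  obtain ⟨n, f, hf⟩ := Module.Finite.exists_fin' R P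
  obtain ⟨s, hs⟩ := Module.projective_lifting_property f LinearMap.id hf
  exact h3 _ _ s f hs (hfree n)

lemma SD.tr_proj (h : SD R C) (P : Type u) [AddCommGroup P] [Module R P] [Module.Finite R P]
    [Module.Projective R P] : TR R C P :=
  fin_pi_ind (fun A _ _ => TR R C A) h.tr_self (fun _ _ _ _ _ _ hA hB => hA.prod hB)
    (fun _ _ _ _ _ _ s r hsr hB => hB.retract s r hsr) P

lemma SD.cov_proj (h : SD R C) (P : Type u) [AddCommGroup P] [Module R P] [Module.Finite R P]
    [Module.Projective R P] : ∀ i, 0 < i → EZ R C (P →ₗ[R] C) i :=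
  fin_pi_ind (fun A _ _ => ∀ i, 0 < i → EZ R C (A →ₗ[R] C) i)
    (fun i hi => (EZ_congr_right (LinearMap.ringLmapEquivSelf R R C)).2 (h.ext i hi))
    (fun _ _ _ _ _ _ hA hB i hi => (EZ_congr_right (LinearMap.coprodEquiv R)).1
      (EZ_prod_right (hA i hi) (hB i hi)))
    (fun _ _ _ _ _ _ s r hsr hB i hi =>
      EZ_retract_right (LinearMap.lcomp R C r) (LinearMap.lcomp R C s)
        (by ext φ a; simpa using congrArg φ (LinearMap.congr_fun hsr a)) (hB i hi)) P

lemma SES.dual_exact {f : A →ₗ[R] B} {g : B →ₗ[R] D} (h : SES f g) :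
    Function.Exact (LinearMap.lcomp R C g) (LinearMap.lcomp R C f) := by
  intro φ
  constructor
  · intro h0
    have hφ : LinearMap.ker g ≤ LinearMap.ker φ := by
      rw [h.exact.linearMap_ker_eq]
      rintro _ ⟨a, rfl⟩
      exact LinearMap.congr_fun h0 a
    refine ⟨(LinearMap.ker g).liftQ φ hφ ∘ₗ
      (g.quotKerEquivOfSurjective h.surj).symm.toLinearMap, ?_⟩
    ext b
    have : (g.quotKerEquivOfSurjective h.surj).symm (g b) = (LinearMap.ker g).mkQ b := by
      rw [LinearEquiv.symm_apply_eq]; rfl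
    simp [this]
  · rintro ⟨ψ, rfl⟩
    ext a
    simp [h.exact.apply_apply_eq_zero]

lemma lcomp_injective {g : B →ₗ[R] D} (hg : Function.Surjective g) :
    Function.Injective (LinearMap.lcomp R C g) := by
  intro φ ψ h
  ext d
  obtain ⟨b, rfl⟩ := hg d
  exact LinearMap.congr_fun h b

lemma SES.dual {f : A →ₗ[R] B} {g : B →ₗ[R] D} (h : SES f g) (hD : EZ R D C 1) :
    SES (LinearMap.lcomp R C g) (LinearMap.lcomp R C f) :=
  ⟨lcomp_injective h.surj, fun φ => h.extend hD φ, h.dual_exact⟩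

lemma TR.kernel {f : A →ₗ[R] B} {g : B →ₗ[R] D} (h : SES f g) (hB : TR R C B) (hD : TR R C D) :
    TR R C A where
  inj := fun a ha => by
    apply h.inj
    rw [map_zero]
    exact hB.inj _ fun φ => ha (φ ∘ₗ f)
  surj := fun Φ => by
    obtain ⟨b, hb⟩ := hB.surj (Φ ∘ₗ LinearMap.lcomp R C f)
    have hgb : g b = 0 := hD.inj _ fun φ => by
      have := hb (φ ∘ₗ g)
      rw [LinearMap.comp_apply φ g] at this
      rw [← this, LinearMap.comp_apply]
      have h0 : LinearMap.lcomp R C f (φ ∘ₗ g) = 0 := (h.dual_exact (C := C) _).2 ⟨φ, rfl⟩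
      rw [h0, map_zero]
    obtain ⟨a, rfl⟩ := (h.exact b).1 hgb
    refine ⟨a, fun φ => ?_⟩
    obtain ⟨ψ, rfl⟩ := h.extend (hD.e1 1 one_pos) φ
    exact hb ψ
  e1 := fun i hi => h.left (hB.e1 i hi) (hD.e1 (i+1) (Nat.succ_pos i))
  e2 := fun i hi => by
    have hd := h.dual (hD.e1 1 one_pos)
    obtain ⟨j, rfl⟩ := Nat.exists_eq_succ_of_ne_zero hi.ne'
    rcases Nat.eq_zero_or_pos j with rfl | hj
    · refine hd.right_zero (fun Φ => ?_) (hB.e2 1 hi)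
      obtain ⟨d, hd⟩ := hD.surj Φ
      obtain ⟨b, rfl⟩ := h.surj d
      exact ⟨LinearMap.applyₗ b, by ext φ; exact (hd φ).symm⟩
    · exact hd.right (hD.e2 j hj) (hB.e2 _ hi)

end Reflexive

section GDim

variable {C : Type u} [AddCommGroup C] [Module R C]
variable {A B D N : Type u} [AddCommGroup A] [Module R A] [AddCommGroup B] [Module R B]
  [AddCommGroup D] [Module R D] [AddCommGroup N] [Module R N]

lemma SES.factor {f : A →ₗ[R] B} {g : B →ₗ[R] D} (h : SES f g) (φ : N →ₗ[R] B)
    (hφ : ∀ x, g (φ x) = 0) : ∃ ψ : N →ₗ[R] A, ∀ x, f (ψ x) = φ x := by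
  refine ⟨(LinearEquiv.ofInjective f h.inj).symm.toLinearMap ∘ₗ
    φ.codRestrict (LinearMap.range f) (fun x => (h.exact _).1 (hφ x)), fun x => ?_⟩
  have := LinearEquiv.apply_symm_apply (LinearEquiv.ofInjective f h.inj)
    (φ.codRestrict (LinearMap.range f) (fun x => (h.exact _).1 (hφ x)) x)
  exact congrArg Subtype.val this

/-- unbundled version of the dimension bound -/
abbrev GD (R : Type u) [CommRing R] (C : Type u) [AddCommGroup C] [Module R C] (n : ℕ)
    (A : Type u) [AddCommGroup A] [Module R A] : Prop :=
  gcdimLE R (ModuleCat.of R C) n (ModuleCat.of R A)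

lemma GD_zero : GD R C 0 A ↔ Module.Finite R A ∧ TR R C A :=
  tr_iff (ModuleCat.of R C) (ModuleCat.of R A)

lemma GD_succ {n : ℕ} : GD R C (n+1) A ↔ ∃ (X K : ModuleCat.{u} R) (f : K →ₗ[R] X)
    (g : X →ₗ[R] A), SES f g ∧ Module.Finite R X ∧ TR R C X ∧ GD R C n K := by
  have key : ∀ X : ModuleCat.{u} R, IsTotallyCReflexive R (ModuleCat.of R C) X ↔
    Module.Finite R X ∧ TR R C X := tr_iff (ModuleCat.of R C)
  constructor
  · rintro ⟨X, K, f, g, h1, h2, h3, h4, h5⟩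
    exact ⟨X, K, f, g, ⟨h1, h2, LinearMap.exact_iff.2 h3⟩, ((key X).1 h4).1, ((key X).1 h4).2, h5⟩
  · rintro ⟨X, K, f, g, h, h3, h4, h5⟩
    exact ⟨X, K, f, g, h.inj, h.surj, h.exact.linearMap_ker_eq, (key X).2 ⟨h3, h4⟩, h5⟩

lemma GD_kernel [IsNoetherianRing R] (n : ℕ) : ∀ {K Z X : Type u} [AddCommGroup K] [Module R K]
    [AddCommGroup Z] [Module R Z] [AddCommGroup X] [Module R X] {f : K →ₗ[R] Z} {g : Z →ₗ[R] X},
    SES f g → GD R C n Z → TR R C X → GD R C n K := by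
  induction n with
  | zero =>
    intro K Z X _ _ _ _ _ _ f g h hZ hX
    obtain ⟨h1, h2⟩ := GD_zero.1 hZ
    exact GD_zero.2 ⟨Module.Finite.of_injective f h.inj, h2.kernel h hX⟩
  | succ n ih =>
    intro K Z X _ _ _ _ _ _ f g h hZ hX
    obtain ⟨Y, W, w, y, hs, hfin, hY, hW⟩ := GD_succ.1 hZ
    let G : Y →ₗ[R] X := g ∘ₗ y
    have hG : Function.Surjective G := h.surj.comp hs.surj
    obtain ⟨q, hq⟩ := h.factor (y ∘ₗ (LinearMap.ker G).subtype) (fun x => x.2)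
    have hw : ∀ x, w x ∈ LinearMap.ker G := fun x => by
      change g (y (w x)) = 0
      rw [hs.exact.apply_apply_eq_zero, map_zero]
    refine GD_succ.2 ⟨ModuleCat.of R (LinearMap.ker G), W, w.codRestrict _ hw, q, ⟨?_, ?_, ?_⟩,
      ?_, ?_, hW⟩
    · intro a b hab
      exact hs.inj (congrArg Subtype.val hab)
    · intro k
      obtain ⟨b, hb⟩ := hs.surj (f k)
      have hb' : b ∈ LinearMap.ker G := by
        change g (y b) = 0
        rw [hb, h.exact.apply_apply_eq_zero]
      exact ⟨⟨b, hb'⟩, h.inj ((hq _).trans hb)⟩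
    · intro b
      constructor
      · intro h0
        have hb : y b.1 = 0 := by
          have := hq b
          rw [h0, map_zero] at this
          exact this.symm
        obtain ⟨a, ha⟩ := (hs.exact _).1 hb
        exact ⟨a, Subtype.ext ha⟩
      · rintro ⟨a, rfl⟩
        apply h.inj
        rw [hq, map_zero]
        exact hs.exact.apply_apply_eq_zero a
    · exact Module.Finite.of_injective (LinearMap.ker G).subtype Subtype.val_injective
    · exact hY.kernel (SES_ker hG) hX

lemma GD_prod (hC : SD R C) (P : Type u) [AddCommGroup P] [Module R P] [Module.Finite R P]
    [Module.Projective R P] (n : ℕ) : ∀ (K : Type u) [AddCommGroup K] [Module R K],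
    GD R C n K → GD R C n (K × P) := by
  have hP := hC.tr_proj P
  cases n with
  | zero =>
    intro K _ _ h
    obtain ⟨h1, h2⟩ := GD_zero.1 h
    exact GD_zero.2 ⟨inferInstance, h2.prod hP⟩
  | succ n =>
    intro K _ _ h
    obtain ⟨X, L, f, g, hs, hfin, hX, hL⟩ := GD_succ.1 h
    refine GD_succ.2 ⟨ModuleCat.of R (X × P), L, LinearMap.inl R X P ∘ₗ f,
      LinearMap.prodMap g LinearMap.id, ⟨?_, ?_, ?_⟩, ?_, hX.prod hP, hL⟩
    · exact LinearMap.inl_injective.comp hs.inj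
    · rintro ⟨k, p⟩
      obtain ⟨x, rfl⟩ := hs.surj k
      exact ⟨(x, p), rfl⟩
    · rintro ⟨x, p⟩
      constructor
      · intro h0
        have h1 : g x = 0 := congrArg Prod.fst h0
        have h2 : p = 0 := congrArg Prod.snd h0
        obtain ⟨a, rfl⟩ := (hs.exact _).1 h1
        exact ⟨a, Prod.ext rfl h2.symm⟩
      · rintro ⟨a, ha⟩
        rw [← ha]
        exact Prod.ext (hs.exact.apply_apply_eq_zero a) rfl
    · exact (inferInstance : Module.Finite R (X × P))

lemma GD_syz [IsNoetherianRing R] (hC : SD R C) {n : ℕ} {K P M : Type u} [AddCommGroup K]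
    [Module R K] [AddCommGroup P] [Module R P] [AddCommGroup M] [Module R M]
    [Module.Finite R P] [Module.Projective R P] {i : K →ₗ[R] P} {π : P →ₗ[R] M} (h : SES i π)
    (hM : GD R C (n+1) M) : GD R C n K := by
  obtain ⟨X, L, f, g, hs, hfin, hX, hL⟩ := GD_succ.1 hM
  obtain ⟨s, hsg⟩ := Module.projective_lifting_property g π hs.surj
  have hsg' : ∀ p, g (s p) = π p := LinearMap.congr_fun hsg
  obtain ⟨κ, hκ⟩ := hs.factor (-(s ∘ₗ i)) (fun x => by
    simp [hsg', h.exact.apply_apply_eq_zero])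
  have hκ' : ∀ k, f (κ k) = - s (i k) := hκ
  refine GD_kernel n (f := κ.prod i) (g := LinearMap.coprod f s) ⟨?_, ?_, ?_⟩
    (GD_prod hC P n L hL) hX
  · intro a b hab
    exact h.inj (congrArg Prod.snd hab)
  · intro x
    obtain ⟨p, hp⟩ := h.surj (g x)
    have : g (x - s p) = 0 := by rw [map_sub, hsg', hp, sub_self]
    obtain ⟨l, hl⟩ := (hs.exact _).1 this
    exact ⟨(l, p), by simp [hl]⟩
  · rintro ⟨l, p⟩
    constructor
    · intro h0
      have h1 : f l + s p = 0 := h0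
      have h2 : π p = 0 := by
        rw [← hsg', eq_neg_of_add_eq_zero_right h1, map_neg, hs.exact.apply_apply_eq_zero, neg_zero]
      obtain ⟨k, rfl⟩ := (h.exact _).1 h2
      refine ⟨k, Prod.ext (hs.inj ?_) rfl⟩
      change f (κ k) = f l
      rw [hκ', eq_neg_of_add_eq_zero_left h1]
    · rintro ⟨k, hk⟩
      rw [← hk]
      change f (κ k) + s (i k) = 0
      rw [hκ', neg_add_cancel]

end GDim

section Grade

variable {C : Type u} [AddCommGroup C] [Module R C]
variable {A B D N : Type u} [AddCommGroup A] [Module R A] [AddCommGroup B] [Module R B]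
  [AddCommGroup D] [Module R D] [AddCommGroup N] [Module R N]

lemma SD.hom_rep (h : SD R C) (Ψ : C →ₗ[R] (A →ₗ[R] C)) :
    ∃ φ : A →ₗ[R] R, ∀ a c, Ψ c a = φ a • c := by
  have hbij : Function.Bijective (LinearMap.lsmul R C) := by
    refine ⟨(injective_iff_map_eq_zero _).2 fun r hr => h.inj r fun c => ?_, fun φ => ?_⟩
    · exact LinearMap.congr_fun hr c
    · obtain ⟨r, hr⟩ := h.surj φ
      exact ⟨r, LinearMap.ext fun c => (hr c).symm⟩
  let e := LinearEquiv.ofBijective (LinearMap.lsmul R C) hbij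
  refine ⟨e.symm.toLinearMap ∘ₗ Ψ.flip, fun a c => ?_⟩
  have : e (e.symm (Ψ.flip a)) = Ψ.flip a := e.apply_symm_apply _
  exact (LinearMap.congr_fun this c).symm

/-- the map `C → Hom(A, C)` given by a functional -/
def scal (C : Type u) [AddCommGroup C] [Module R C] (φ : A →ₗ[R] R) : C →ₗ[R] (A →ₗ[R] C) :=
  (LinearMap.lsmul R C ∘ₗ φ).flip

lemma scal_apply (φ : A →ₗ[R] R) (c : C) (a : A) : scal C φ c a = φ a • c := rfl

lemma SD.zero_of_hom [IsNoetherianRing R] (h : SD R C) (F : Type u) [AddCommGroup F] [Module R F]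
    [Module.Finite R F] (h0 : ∀ θ : C →ₗ[R] F, θ = 0) : Subsingleton F := by
  have := h.fin
  have hs : Subsingleton (C →ₗ[R] F) := subsingleton_of_forall_eq 0 h0
  obtain ⟨r, hr, hreg⟩ := IsSMulRegular.subsingleton_linearMap_iff.1 hs
  have hr0 : r = 0 := h.inj r (Module.mem_annihilator.1 hr)
  subst hr0
  exact IsSMulRegular.zero_iff_subsingleton.1 hreg

lemma SES.one_iff {f : A →ₗ[R] B} {g : B →ₗ[R] D} (h : SES f g) [Module.Projective R B] :
    EZ R D N 1 ↔ ∀ φ : A →ₗ[R] N, ∃ ψ : B →ₗ[R] N, ψ ∘ₗ f = φ :=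
  ⟨fun h1 => h.extend h1, fun h1 => h.right_zero h1 (EZ_of_projective 1 one_pos)⟩

lemma SES.shift_iff {f : A →ₗ[R] B} {g : B →ₗ[R] D} (h : SES f g) [Module.Projective R B]
    {i : ℕ} (hi : 0 < i) : EZ R D N (i+1) ↔ EZ R A N i :=
  ⟨fun h1 => h.left (EZ_of_projective i hi) h1,
    fun h1 => h.right h1 (EZ_of_projective _ (Nat.succ_pos i))⟩

lemma grade_one [IsNoetherianRing R] (hC : SD R C) {f : A →ₗ[R] B} {g : B →ₗ[R] D}
    (h : SES f g) [Module.Finite R B] [Module.Projective R B]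
    (hD : ∀ j, 0 < j → EZ R C (D →ₗ[R] C) j) : EZ R D R 1 ↔ EZ R D C 1 := by
  have hfin := hC.fin
  have hA : Module.Finite R A := Module.Finite.of_injective f h.inj
  constructor
  · intro h1
    have hs : SES (LinearMap.lcomp R C g) (LinearMap.lcomp R C f).rangeRestrict := by
      refine ⟨lcomp_injective h.surj, LinearMap.surjective_rangeRestrict _, fun x => ?_⟩
      rw [← h.dual_exact (C := C) x]
      exact Subtype.ext_iff
    have hB' : EZ R C (LinearMap.range (LinearMap.lcomp R C f)) 1 :=
      hs.cov_right (hC.cov_proj B 1 one_pos) (hD 2 two_pos)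
    have hF : Subsingleton ((A →ₗ[R] C) ⧸ LinearMap.range (LinearMap.lcomp R C f)) := by
      refine hC.zero_of_hom _ fun θ => ?_
      obtain ⟨Θ, rfl⟩ := (SES_mkQ (LinearMap.range (LinearMap.lcomp R C f))).lift hB' θ
      obtain ⟨φ, hφ⟩ := hC.hom_rep Θ
      obtain ⟨ψ, rfl⟩ := h.extend h1 φ
      refine LinearMap.ext fun c => ?_
      rw [LinearMap.comp_apply, Submodule.mkQ_apply, LinearMap.zero_apply,
        Submodule.Quotient.mk_eq_zero]
      exact ⟨scal C ψ c, LinearMap.ext fun a => (hφ a c).symm⟩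
    rw [Submodule.Quotient.subsingleton_iff, LinearMap.range_eq_top] at hF
    exact h.one_iff.2 fun φ => hF φ
  · intro h1
    have hd := h.dual h1
    refine h.one_iff.2 fun φ => ?_
    obtain ⟨Ψ, hΨ⟩ := hd.lift (hD 1 one_pos) (scal C φ)
    obtain ⟨ψ, hψ⟩ := hC.hom_rep Ψ
    refine ⟨ψ, LinearMap.ext fun a => sub_eq_zero.1 (hC.inj _ fun c => ?_)⟩
    have := LinearMap.congr_fun (LinearMap.congr_fun hΨ c) a
    rw [sub_smul, sub_eq_zero, ← scal_apply φ c a, ← this]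
    exact (hψ (f a) c).symm

lemma grade_aux [IsNoetherianRing R] (hC : SD R C) (m : ℕ) : ∀ (X : Type u) [AddCommGroup X]
    [Module R X] [Module.Finite R X], (∀ j, 0 < j → EZ R C (X →ₗ[R] C) j) →
    ((∀ i, 1 ≤ i → i ≤ m → EZ R X R i) ↔ (∀ i, 1 ≤ i → i ≤ m → EZ R X C i)) := by
  induction m with
  | zero => intro X _ _ _ _; constructor <;> intro _ i h1 h2 <;> omega
  | succ m ih =>
    intro X _ _ _ hX
    obtain ⟨n, g, hg⟩ := Module.Finite.exists_fin' R X
    have h := SES_ker hg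
    have h1 := grade_one hC h hX
    have hsplit : ∀ N : Type u, ∀ [AddCommGroup N] [Module R N],
        (∀ i, 1 ≤ i → i ≤ m + 1 → EZ R X N i) ↔
        (EZ R X N 1 ∧ ∀ i, 1 ≤ i → i ≤ m → EZ R (LinearMap.ker g) N i) := by
      intro N _ _
      constructor
      · intro H
        exact ⟨H 1 le_rfl (by omega), fun i hi him =>
          (h.shift_iff hi).1 (H (i+1) (by omega) (by omega))⟩
      · rintro ⟨H1, H2⟩ i hi him
        obtain ⟨j, rfl⟩ := Nat.exists_eq_succ_of_ne_zero (by omega : i ≠ 0)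
        rcases Nat.eq_zero_or_pos j with rfl | hj
        · exact H1
        · exact (h.shift_iff hj).2 (H2 j hj (by omega))
    rw [hsplit R, hsplit C, h1]
    refine and_congr_right fun hX1 => ih _ fun j hj => ?_
    exact (h.dual hX1).cov_right (hC.cov_proj _ j hj) (hX (j+1) (Nat.succ_pos j))

lemma grade_iff [IsNoetherianRing R] (hC : SD R C) (m : ℕ) (E : Type u) [AddCommGroup E]
    [Module R E] [Module.Finite R E] :
    (∀ i, i < m → EZ R E R i) ↔ (∀ i, i < m → EZ R E C i) := by
  have hfin := hC.fin
  cases m with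
  | zero => simp
  | succ m =>
    have hsplit : ∀ N : Type u, ∀ [AddCommGroup N] [Module R N],
        (∀ i, i < m + 1 → EZ R E N i) ↔
        (EZ R E N 0 ∧ ∀ i, 1 ≤ i → i ≤ m → EZ R E N i) := by
      intro N _ _
      constructor
      · intro H
        exact ⟨H 0 (by omega), fun i hi him => H i (by omega)⟩
      · rintro ⟨H1, H2⟩ i hi
        rcases Nat.eq_zero_or_pos i with rfl | hj
        · exact H1
        · exact H2 i hj (by omega)
    have h0 : EZ R E R 0 ↔ EZ R E C 0 := by
      rw [EZ_zero_iff, EZ_zero_iff]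
      constructor
      · intro H
        have : Subsingleton (E →ₗ[R] C) := by
          refine hC.zero_of_hom _ fun θ => ?_
          obtain ⟨φ, hφ⟩ := hC.hom_rep θ
          refine LinearMap.ext fun c => LinearMap.ext fun e => ?_
          rw [hφ, H φ]
          simp
        exact fun φ => Subsingleton.elim _ _
      · intro H φ
        refine LinearMap.ext fun e => hC.inj _ fun c => ?_
        rw [← scal_apply φ c e, H (scal C φ c)]
        rfl
    rw [hsplit R, hsplit C, h0]
    refine and_congr_right fun hE => grade_aux hC m E fun j hj => ?_
    refine EZ_retract_right (B := C) 0 0 ?_ (hC.ext j hj)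
    refine LinearMap.ext fun φ => ?_
    rw [EZ_zero_iff.1 hE φ, map_zero, map_zero]

end Grade

section Main

variable {C : Type u} [AddCommGroup C] [Module R C]
variable {A B D N : Type u} [AddCommGroup A] [Module R A] [AddCommGroup B] [Module R B]
  [AddCommGroup D] [Module R D] [AddCommGroup N] [Module R N]

lemma SES_coker (a : A →ₗ[R] B) (v : B →ₗ[R] D) (w : A →ₗ[R] D) (hw : w = v ∘ₗ a)
    (hv : Function.Injective v) :
    ∃ (p : (B ⧸ LinearMap.range a) →ₗ[R] (D ⧸ LinearMap.range w))
      (q : (D ⧸ LinearMap.range w) →ₗ[R] (D ⧸ LinearMap.range v)), SES p q := by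
  subst hw
  have h1 : LinearMap.range a ≤ (LinearMap.range (v ∘ₗ a)).comap v := by
    rintro _ ⟨x, rfl⟩; exact ⟨x, rfl⟩
  have h2 : LinearMap.range (v ∘ₗ a) ≤ LinearMap.ker (LinearMap.range v).mkQ := by
    rintro _ ⟨x, rfl⟩
    rw [Submodule.ker_mkQ]
    exact ⟨a x, rfl⟩
  refine ⟨(LinearMap.range a).mapQ _ v h1, (LinearMap.range (v ∘ₗ a)).liftQ _ h2, ?_, ?_, ?_⟩
  · rw [injective_iff_map_eq_zero]
    intro x hx
    obtain ⟨b, rfl⟩ := Submodule.mkQ_surjective _ x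
    have hx' : (LinearMap.range (v ∘ₗ a)).mkQ (v b) = 0 := hx
    rw [Submodule.mkQ_apply, Submodule.Quotient.mk_eq_zero] at hx'
    obtain ⟨y, hy⟩ := hx'
    rw [Submodule.mkQ_apply, Submodule.Quotient.mk_eq_zero]
    exact ⟨y, hv hy⟩
  · intro x
    obtain ⟨b, rfl⟩ := Submodule.mkQ_surjective _ x
    exact ⟨(LinearMap.range (v ∘ₗ a)).mkQ b, rfl⟩
  · intro x
    obtain ⟨b, rfl⟩ := Submodule.mkQ_surjective _ x
    constructor
    · intro hx
      have hx' : (LinearMap.range v).mkQ b = 0 := hx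
      rw [Submodule.mkQ_apply, Submodule.Quotient.mk_eq_zero] at hx'
      obtain ⟨y, rfl⟩ := hx'
      exact ⟨(LinearMap.range a).mkQ y, rfl⟩
    · rintro ⟨y, hy⟩
      obtain ⟨y, rfl⟩ := Submodule.mkQ_surjective _ y
      rw [← hy]
      change (LinearMap.range v).mkQ (v y) = 0
      rw [Submodule.mkQ_apply, Submodule.Quotient.mk_eq_zero]
      exact ⟨y, rfl⟩

lemma SES_coker2 (a : A →ₗ[R] B) (v : B →ₗ[R] D) (h : Function.Exact a v) :
    ∃ p : (B ⧸ LinearMap.range a) →ₗ[R] D, (∀ b, p ((LinearMap.range a).mkQ b) = v b) ∧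
      SES p (LinearMap.range v).mkQ := by
  have h1 : LinearMap.range a ≤ LinearMap.ker v := h.linearMap_ker_eq.ge
  refine ⟨(LinearMap.range a).liftQ v h1, fun b => rfl, ?_, Submodule.mkQ_surjective _, ?_⟩
  · rw [injective_iff_map_eq_zero]
    intro x hx
    obtain ⟨b, rfl⟩ := Submodule.mkQ_surjective _ x
    rw [Submodule.mkQ_apply, Submodule.Quotient.mk_eq_zero]
    exact (h b).1 hx
  · intro x
    rw [Submodule.mkQ_apply, Submodule.Quotient.mk_eq_zero]
    constructor
    · rintro ⟨b, rfl⟩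
      exact ⟨(LinearMap.range a).mkQ b, rfl⟩
    · rintro ⟨b, hb⟩
      obtain ⟨b, rfl⟩ := Submodule.mkQ_surjective _ b
      exact ⟨b, hb⟩

lemma main_base [IsNoetherianRing R] (hC : SD R C) (M P1 P0 E : Type u)
    [AddCommGroup M] [Module R M] [AddCommGroup P1] [Module R P1] [AddCommGroup P0] [Module R P0]
    [AddCommGroup E] [Module R E] [Module.Finite R P1] [Module.Projective R P1]
    [Module.Finite R P0] [Module.Projective R P0] (d : P1 →ₗ[R] P0) (π : P0 →ₗ[R] M)
    (hπ : Function.Surjective π) (hd : Function.Exact d π) (hM : GD R C 1 M)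
    (e : E ≃ₗ[R] Abelian.Ext (ModuleCat.of R M) (ModuleCat.of R C) 1) :
    EZ R E C 0 ∧ ∀ i, 1 ≤ i →
      (EZ R ((P1 →ₗ[R] C) ⧸ LinearMap.range (LinearMap.lcomp R C d)) C i ↔ EZ R E C i) := by
  have h := SES_ker hπ
  obtain ⟨-, hK⟩ := GD_zero.1 (GD_syz hC h hM)
  have hdk : ∀ x, d x ∈ LinearMap.ker π := fun x => hd.apply_apply_eq_zero x
  let dK : P1 →ₗ[R] LinearMap.ker π := d.codRestrict _ hdk
  have hdK : Function.Surjective dK := by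
    rintro ⟨y, hy⟩
    obtain ⟨x, rfl⟩ := (hd y).1 hy
    exact ⟨x, rfl⟩
  obtain ⟨e1⟩ := h.shift_equiv_one (N := C)
  have hE : ∀ i, EZ R E C i ↔ EZ R _ C i := fun i => EZ_congr (e.trans e1.symm)
  constructor
  · rw [hE, EZ_zero_iff]
    intro φ
    obtain ⟨k, hk⟩ := hK.surj (φ ∘ₗ Submodule.mkQ _)
    have hk0 : k = 0 := by
      refine Subtype.ext ((hC.tr_proj P0).inj _ fun ψ => ?_)
      have h1 := hk (LinearMap.lcomp R C (LinearMap.ker π).subtype ψ)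
      have h2 : (LinearMap.range (LinearMap.lcomp R C (LinearMap.ker π).subtype)).mkQ
        (LinearMap.lcomp R C (LinearMap.ker π).subtype ψ) = 0 := by
        rw [Submodule.mkQ_apply, Submodule.Quotient.mk_eq_zero]
        exact ⟨ψ, rfl⟩
      rw [LinearMap.comp_apply, h2, map_zero] at h1
      exact h1.symm
    refine LinearMap.ext fun x => ?_
    obtain ⟨x, rfl⟩ := Submodule.mkQ_surjective _ x
    have := hk x
    rw [hk0, map_zero] at this
    exact this
  · have hinj := lcomp_injective (C := C) hdK
    have hQ1 := SES_range hinj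
    have hQ : ∀ i, 1 ≤ i → EZ R ((P1 →ₗ[R] C) ⧸ LinearMap.range (LinearMap.lcomp R C dK)) C i := by
      intro i hi
      obtain ⟨j, rfl⟩ := Nat.exists_eq_succ_of_ne_zero (by omega : i ≠ 0)
      rcases Nat.eq_zero_or_pos j with rfl | hj
      · refine hQ1.right_zero (fun Φ => ?_) ((hC.tr_proj P1).e2 1 one_pos)
        obtain ⟨k, hk⟩ := hK.surj Φ
        obtain ⟨p, rfl⟩ := hdK k
        exact ⟨LinearMap.applyₗ p, LinearMap.ext fun φ => (hk φ).symm⟩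
      · exact hQ1.right (hK.e2 j hj) ((hC.tr_proj P1).e2 _ hi)
    obtain ⟨p, q, hpq⟩ := SES_coker (LinearMap.lcomp R C (LinearMap.ker π).subtype)
      (LinearMap.lcomp R C dK) (LinearMap.lcomp R C d) rfl hinj
    intro i hi
    rw [hE]
    exact ⟨fun H => hpq.left H (hQ (i+1) (by omega)), fun H => hpq.mid H (hQ i hi)⟩

lemma main_aux [IsNoetherianRing R] (hC : SD R C) (n : ℕ) : ∀ (M P1 P0 E : Type u)
    [AddCommGroup M] [Module R M] [AddCommGroup P1] [Module R P1] [AddCommGroup P0] [Module R P0]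
    [AddCommGroup E] [Module R E] [Module.Finite R P1] [Module.Projective R P1]
    [Module.Finite R P0] [Module.Projective R P0] (d : P1 →ₗ[R] P0) (π : P0 →ₗ[R] M)
    (_ : Function.Surjective π) (_ : Function.Exact d π) (_ : GD R C (n+1) M)
    (_ : ∀ i, 0 < i → i < n + 1 → EZ R M C i)
    (_ : E ≃ₗ[R] Abelian.Ext (ModuleCat.of R M) (ModuleCat.of R C) (n+1)),
    (∀ i, i < n + 1 → EZ R E C i) ∧ ∀ i, 1 ≤ i →
      (EZ R ((P1 →ₗ[R] C) ⧸ LinearMap.range (LinearMap.lcomp R C d)) C i ↔ EZ R E C (i+n)) := by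
  induction n with
  | zero =>
    intro M P1 P0 E _ _ _ _ _ _ _ _ _ _ _ _ d π hπ hd hM _ e
    obtain ⟨h1, h2⟩ := main_base hC M P1 P0 E d π hπ hd hM e
    refine ⟨fun i hi => ?_, h2⟩
    obtain rfl : i = 0 := by omega
    exact h1
  | succ n ih =>
    intro M P1 P0 E _ _ _ _ _ _ _ _ _ _ _ _ d π hπ hd hM hv e
    have h := SES_ker hπ
    have hdk : ∀ x, d x ∈ LinearMap.ker π := fun x => hd.apply_apply_eq_zero x
    let dK : P1 →ₗ[R] LinearMap.ker π := d.codRestrict _ hdk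
    have hdK : Function.Surjective dK := by
      rintro ⟨y, hy⟩
      obtain ⟨x, rfl⟩ := (hd y).1 hy
      exact ⟨x, rfl⟩
    obtain ⟨m, g2, hg2⟩ := Module.Finite.exists_fin' R (LinearMap.ker dK)
    let d2 : (Fin m → R) →ₗ[R] P1 := (LinearMap.ker dK).subtype ∘ₗ g2
    have hd2 : Function.Exact d2 dK := by
      intro x
      constructor
      · intro hx
        obtain ⟨y, hy⟩ := hg2 ⟨x, hx⟩
        exact ⟨y, congrArg Subtype.val hy⟩
      · rintro ⟨y, rfl⟩
        exact (g2 y).2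
    have hM1 : EZ R M C 1 := hv 1 one_pos (by omega)
    obtain ⟨e2⟩ := h.shift_equiv (N := C) n
    obtain ⟨ih1, ih2⟩ := ih (LinearMap.ker π) (Fin m → R) P1 E d2 dK hdK hd2 (GD_syz hC h hM)
      (fun i hi hin => (h.shift_iff hi).1 (hv (i+1) (by omega) (by omega))) (e.trans e2.symm)
    have hex : Function.Exact (LinearMap.lcomp R C d) (LinearMap.lcomp R C d2) := by
      intro φ
      constructor
      · intro h0
        have h0' : LinearMap.lcomp R C (LinearMap.ker dK).subtype φ = 0 := by
          refine LinearMap.ext fun x => ?_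
          obtain ⟨y, rfl⟩ := hg2 x
          exact LinearMap.congr_fun h0 y
        obtain ⟨κ, rfl⟩ := ((SES_ker hdK).dual_exact φ).1 h0'
        obtain ⟨ψ, rfl⟩ := h.extend hM1 κ
        exact ⟨ψ, rfl⟩
      · rintro ⟨ψ, rfl⟩
        refine LinearMap.ext fun y => ?_
        have : d (d2 y) = 0 := congrArg Subtype.val (hd2.apply_apply_eq_zero y)
        change ψ (d (d2 y)) = 0
        rw [this, map_zero]
    obtain ⟨p, hp, hs⟩ := SES_coker2 _ _ hex
    have hP2 := (hC.tr_proj (Fin m → R)).e2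
    have hT1 : EZ R (((Fin m → R) →ₗ[R] C) ⧸ LinearMap.range (LinearMap.lcomp R C d2)) C 1 := by
      refine hs.right_zero (fun φ => ?_) (hP2 1 one_pos)
      obtain ⟨p1, hp1⟩ := (hC.tr_proj P1).surj (φ ∘ₗ Submodule.mkQ _)
      have hdp : d p1 = 0 := by
        refine (hC.tr_proj P0).inj _ fun ψ => ?_
        have h1 := hp1 (LinearMap.lcomp R C d ψ)
        have h2 : (LinearMap.range (LinearMap.lcomp R C d)).mkQ (LinearMap.lcomp R C d ψ) = 0 := by
          rw [Submodule.mkQ_apply, Submodule.Quotient.mk_eq_zero]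
          exact ⟨ψ, rfl⟩
        rw [LinearMap.comp_apply, h2, map_zero] at h1
        exact h1.symm
      obtain ⟨p2, rfl⟩ := (hd2 p1).1 (Subtype.ext hdp)
      refine ⟨LinearMap.applyₗ p2, LinearMap.ext fun x => ?_⟩
      obtain ⟨θ, rfl⟩ := Submodule.mkQ_surjective _ x
      rw [LinearMap.comp_apply, hp]
      exact (hp1 θ).symm
    refine ⟨fun i hi => ?_, fun i hi => ?_⟩
    · rcases Nat.lt_or_ge i (n+1) with hlt | hge
      · exact ih1 i hlt
      · have : i = 1 + n := by omega
        rw [this]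
        exact (ih2 1 le_rfl).1 hT1
    · rw [show i + (n+1) = i + 1 + n by omega, ← ih2 (i+1) (by omega)]
      exact ⟨fun H => hs.right H (hP2 _ (by omega)), fun H => hs.left (hP2 i hi) H⟩

end Main

end Helpers

/-- if `M` is reduced `G_C`-perfect of `G_C`-dimension `n` and `k ≥ 0`,
then `M` is `C`-`k`-torsionless iff `grade(Ext_R^n(M,C)) ≥ n + k`. -/
theorem statement19 [IsNoetherianRing R] (hsp : IsSemiperfectRing R)
    (C : ModuleCat.{u} R) (hC : IsSemidualizing R C)
    (M : ModuleCat.{u} R) (hMfin : Module.Finite R ↥M)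
    (n : ℕ) (hred : IsReducedGCPerfect R C M) (hdim : gcdim R C M = n)
    (k : ℕ) :
    IsCkTorsionless R C M k ↔
      ((n + k : ℕ) : ℕ∞) ≤ gradeR R (ExtM R M C n) := by
  classical
  have hCs := sd_of C hC
  have hCfin : Module.Finite R C := hC.1
  -- the reduced grade is positive, hence so is the dimension
  have hrg : rgrade R C M = n := hred.2.trans hdim
  have hn0 : n ≠ 0 := by
    rintro rfl
    have h1 : (1 : ℕ∞) ≤ rgrade R C M := by
      refine le_sInf ?_
      rintro _ ⟨i, hi, rfl⟩
      change (1 : ℕ∞) ≤ (i : ℕ∞)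
      exact_mod_cast Nat.succ_le_of_lt hi.1
    rw [hrg] at h1
    simp at h1
  obtain ⟨m, rfl⟩ := Nat.exists_eq_succ_of_ne_zero hn0
  have hGD : gcdimLE R C (m+1) M := by
    have hne : ((fun n : ℕ => (n : ℕ∞)) '' {n | gcdimLE R C n M}).Nonempty := by
      rw [Set.nonempty_iff_ne_empty]
      intro h0
      apply hred.1
      unfold gcdim
      rw [h0, sInf_empty]
    obtain ⟨j, hj, hj'⟩ := csInf_mem hne
    have hj2 : (j : ℕ∞) = ((m+1 : ℕ) : ℕ∞) := hj'.trans hdim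
    have hj3 : j = m + 1 := by exact_mod_cast hj2
    rw [← hj3]
    exact hj
  have hv : ∀ i, 0 < i → i < m + 1 → EZ R M C i := by
    intro i hi him
    rw [← extM_iff_EZ M C i]
    by_contra hcon
    have h1 : rgrade R C M ≤ (i : ℕ∞) := sInf_le ⟨i, ⟨hi, hcon⟩, rfl⟩
    rw [hrg] at h1
    have h2 : m + 1 ≤ i := by exact_mod_cast h1
    omega
  obtain ⟨e⟩ := extM_equiv_succ M C m
  have hEfin : Module.Finite R (ExtM R M C (m+1)) := by
    have : Module.Finite R (Abelian.Ext M C (m+1)) := ModuleCat.finite_ext R M C (m+1)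
    exact Module.Finite.equiv e.symm
  have hgrade : ((m + 1 + k : ℕ) : ℕ∞) ≤ gradeR R (ExtM R M C (m+1)) ↔
      ∀ i, i < m + 1 + k → EZ R (ExtM R M C (m+1)) C i := by
    rw [← grade_iff hCs]
    constructor
    · intro h i hi
      rw [← show Subsingleton (ExtM R (ExtM R M C (m+1)) (ModuleCat.of R R) i) ↔ _ from
        extM_iff_EZ _ _ i]
      by_contra hcon
      have h1 : gradeR R (ExtM R M C (m+1)) ≤ (i : ℕ∞) := sInf_le ⟨i, hcon, rfl⟩
      have h2 : m + 1 + k ≤ i := by exact_mod_cast h.trans h1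
      omega
    · intro h
      refine le_sInf ?_
      rintro _ ⟨i, hi, rfl⟩
      by_contra hcon
      have hlt : i < m + 1 + k := by
        rw [not_le] at hcon
        change (i : ℕ∞) < _ at hcon
        exact_mod_cast hcon
      exact hi ((extM_iff_EZ _ _ i).2 (h i hlt))
  have hmain : ∀ (P1 P0 : ModuleCat.{u} R) (d : ↥P1 →ₗ[R] ↥P0) (π : ↥P0 →ₗ[R] ↥M),
      IsMinimalPresentation R d π →
      (∀ i, i < m + 1 → EZ R (ExtM R M C (m+1)) C i) ∧ ∀ i, 1 ≤ i →
      (EZ R ((P1 →ₗ[R] C) ⧸ LinearMap.range (LinearMap.lcomp R C d)) C i ↔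
        EZ R (ExtM R M C (m+1)) C (i+m)) := by
    rintro P1 P0 d π ⟨h1, h2, ⟨h3, h4, -⟩, h5, h6, -⟩
    exact main_aux hCs m M P1 P0 (ExtM R M C (m+1)) d π h4 (LinearMap.exact_iff.2 h5.symm)
      hGD hv e
  -- existence of a minimal presentation
  obtain ⟨P1, P0, d, π, hmin⟩ : ∃ (P1 P0 : ModuleCat.{u} R) (d : ↥P1 →ₗ[R] ↥P0)
      (π : ↥P0 →ₗ[R] ↥M), IsMinimalPresentation R d π := by
    obtain ⟨P0, π, hf0, hπ⟩ := hsp M hMfin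
    obtain ⟨P1, δ, hf1, hδ⟩ := hsp (ModuleCat.of R (LinearMap.ker π))
      (inferInstanceAs (Module.Finite R (LinearMap.ker π)))
    let δ' : P1 →ₗ[R] LinearMap.ker π := δ
    have hδ' : Function.Surjective δ' := hδ.2.1
    refine ⟨P1, P0, (LinearMap.ker π).subtype ∘ₗ δ', π, hf1, hf0, hπ, ?_, hδ.1, ?_⟩
    · rw [LinearMap.range_comp, LinearMap.range_eq_top.2 hδ', Submodule.map_top,
        Submodule.range_subtype]
    · intro N hN
      rw [LinearMap.ker_comp, Submodule.ker_subtype] at hN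
      exact hδ.2.2 N hN
  obtain ⟨hlow, hhigh⟩ := hmain P1 P0 d π hmin
  rw [hgrade]
  constructor
  · intro ht i hi
    rcases Nat.lt_or_ge i (m+1) with hlt | hge
    · exact hlow i hlt
    · rcases ht with rfl | ht
      · omega
      · obtain ⟨j, rfl⟩ := Nat.exists_eq_add_of_le' (show m ≤ i by omega)
        refine (hhigh j (by omega)).1 ?_
        have := ht (ModuleCat.of R ((P1 →ₗ[R] C) ⧸ LinearMap.range (LinearMap.lcomp R C d)))
          ⟨P1, P0, d, π, hmin, ⟨LinearEquiv.refl R _⟩⟩ j (by omega) (by omega)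
        exact (extM_iff_EZ _ _ j).1 this
  · intro h
    refine Or.inr ?_
    rintro T ⟨Q1, Q0, d', π', hmin', ⟨eT⟩⟩ i hi hik
    refine (extM_iff_EZ _ _ i).2 ?_
    refine (EZ_congr eT).2 (((hmain Q1 Q0 d' π' hmin').2 i hi).2 (h (i+m) (by omega)))

end
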